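/- (Dehn–Sommerville equations) For every n-dimensional simplicial convex polytope P ⊂ ℝⁿ and every integer k with −1 ≤ k ≤ n − 2, one has Σ_{j=k}^{n−1} (−1)^j · C(j+1, k+1) · f_j(P) = (−1)^{n−1} · f_k(P), where C denotes the binomial coefficient. -/

import Mathlib

open scoped BigOperators

noncomputable section

/-- Dimension of a subset of a real vector space: the rank of its vector span. -/
def sdim {n : ℕ} (s : Set (EuclideanSpace ℝ (Fin n))) : ℕ :=
  Module.finrank ℝ (vectorSpan ℝ s)

/-- An `n`-dimensional convex polytope in `ℝⁿ`: the convex hull of a finite set of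
points, with nonempty interior. -/
structure ConvexPolytope (n : ℕ) where
  verts : Finset (EuclideanSpace ℝ (Fin n))
  nonempty_int :
    (interior (convexHull ℝ (verts : Set (EuclideanSpace ℝ (Fin n))))).Nonempty

/-- `F` is an `m`-simplex: the convex hull of `m` affinely independent points. -/
def IsSimplexSet {n : ℕ} (F : Set (EuclideanSpace ℝ (Fin n))) (m : ℕ) : Prop :=
  ∃ s : Finset (EuclideanSpace ℝ (Fin n)),
    s.card = m ∧
    AffineIndependent ℝ (fun v : s => (v : EuclideanSpace ℝ (Fin n))) ∧
    F = convexHull ℝ (s : Set (EuclideanSpace ℝ (Fin n)))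

namespace ConvexPolytope

variable {n : ℕ} (P : ConvexPolytope n)

/-- The underlying set of the polytope. -/
def carrier : Set (EuclideanSpace ℝ (Fin n)) :=
  convexHull ℝ (P.verts : Set (EuclideanSpace ℝ (Fin n)))

/-- The `k`-faces of `P`: the `k`-dimensional (nonempty) exposed faces of `P`. -/
def faces (k : ℕ) : Set (Set (EuclideanSpace ℝ (Fin n))) :=
  {F | IsExposed ℝ P.carrier F ∧ F.Nonempty ∧ sdim F = k}

/-- `f_k(P)`: the number of `k`-faces of `P` (for `0 ≤ k ≤ n`). -/
def fcount (k : ℕ) : ℕ := (P.faces k).ncard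

/-- The face numbers with integer index and the conventions `f₋₁ = fₙ = 1`. -/
def fZ (k : ℤ) : ℕ :=
  if k = -1 ∨ k = (n : ℤ) then 1
  else if 0 ≤ k ∧ k < (n : ℤ) then P.fcount k.toNat
  else 0

/-- `P` is simplicial: every facet is an `(n-1)`-simplex, i.e. the convex hull of `n`
affinely independent points. -/
def IsSimplicial : Prop :=
  ∀ F ∈ P.faces (n - 1), IsSimplexSet F n

/-- `P` is simple at edges: every `1`-dimensional face of `P` is contained in exactly
`n - 1` facets. -/
def SimpleAtEdges : Prop :=
  ∀ L ∈ P.faces 1, {F ∈ P.faces (n - 1) | L ⊆ F}.ncard = n - 1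

end ConvexPolytope

/-- The `l`-faces of a face `F`: the `l`-dimensional (nonempty) exposed faces of `F`. -/
def subfaces {n : ℕ} (F : Set (EuclideanSpace ℝ (Fin n))) (l : ℕ) :
    Set (Set (EuclideanSpace ℝ (Fin n))) :=
  {G | IsExposed ℝ F G ∧ G.Nonempty ∧ sdim G = l}

/-!
Translate an interior point of the polytope to the origin, so that the cones over the facets form a
complete simplicial fan, and let `c` be a generic vector. For a facet with vertex set `F` let `R F`
be the set of vertices along which `c` has positive coordinate in the basis `F`. For every face `G`
(possibly empty) the point `N • ∑ v ∈ G, v - c` with `N` large lies in the cone over exactly one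
facet, namely the unique `F` with `R F ⊆ G ⊆ F`; so the intervals `[R F, F]` partition the boundary
complex. Applied to `-c` this gives the partition into the intervals `[F \ R F, F]`. In each
interval, inclusion-exclusion gives
`∑ G ∈ [R F, F], (-1) ^ #G * (#G).choose m = (-1) ^ n * #{H ∈ [F \ R F, F] | #H = m}`,
and summing over the facets yields the equations.
-/

/-! ### Partitionable complexes -/

section Combinatorics

open Finset

variable {ι R : Type*} [DecidableEq ι] [CommRing R]

lemma sum_Icc_neg_one_pow_card {A F : Finset ι} (hAF : A ⊆ F) :
    ∑ G ∈ Icc A F, (-1 : R) ^ #G = if A = F then (-1) ^ #F else 0 := by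
  have powerset_sum : ∑ G ∈ (F \ A).powerset, (-1 : R) ^ #G = if F \ A = ∅ then 1 else 0 := by
    simpa using congrArg (Int.cast : ℤ → R) (sum_powerset_neg_one_pow_card (x := F \ A))
  calc ∑ G ∈ Icc A F, (-1 : R) ^ #G
      = ∑ G ∈ (F \ A).powerset, (-1) ^ #A * (-1) ^ #G := by
        refine sum_nbij' (· \ A) (A ∪ ·) ?_ ?_ ?_ ?_ ?_
        · exact fun G hG ↦ mem_powerset.2 (sdiff_subset_sdiff (mem_Icc.1 hG).2 subset_rfl)
        · exact fun G hG ↦ mem_Icc.2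
            ⟨subset_union_left, union_subset hAF ((mem_powerset.1 hG).trans sdiff_subset)⟩
        · exact fun G hG ↦ union_sdiff_of_subset (mem_Icc.1 hG).1
        · exact fun G hG ↦ union_sdiff_cancel_left
            (disjoint_sdiff.mono_right (mem_powerset.1 hG))
        · intro G hG
          rw [← pow_add, add_comm, card_sdiff_add_card_eq_card (mem_Icc.1 hG).1]
    _ = if A = F then (-1) ^ #F else 0 := by
        rw [← mul_sum, powerset_sum]
        have : F \ A = ∅ ↔ A = F :=
          sdiff_eq_empty_iff_subset.trans ⟨hAF.antisymm, fun h ↦ h.ge⟩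
        grind

lemma sum_Icc_neg_one_pow_card_mul_choose {A F : Finset ι} (hAF : A ⊆ F) (m : ℕ) :
    ∑ G ∈ Icc A F, (-1 : R) ^ #G * (#G).choose m
      = ∑ H ∈ Icc (F \ A) F, if #H = m then (-1) ^ #F else 0 := by
  calc ∑ G ∈ Icc A F, (-1 : R) ^ #G * (#G).choose m
      = ∑ G ∈ Icc A F, ∑ H ∈ G.powersetCard m, (-1) ^ #G := by
        simp [mul_comm]
    _ = ∑ H ∈ F.powersetCard m, ∑ G ∈ Icc (A ∪ H) F, (-1) ^ #G := by
        refine sum_comm' fun G H ↦ ?_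
        simp only [mem_Icc, mem_powersetCard, union_subset_iff]
        grind
    _ = ∑ H ∈ F.powersetCard m, if A ∪ H = F then (-1) ^ #F else 0 :=
        sum_congr rfl fun H hH ↦
          sum_Icc_neg_one_pow_card (union_subset hAF (mem_powersetCard.1 hH).1)
    _ = ∑ H ∈ Icc (F \ A) F, if #H = m then (-1) ^ #F else 0 := by
        rw [← sum_filter, ← sum_filter]
        congr 1
        ext H
        simp only [mem_filter, mem_powersetCard, mem_Icc]
        grind

/-- The abstract simplicial complex generated by a finite family of facets, the empty face
included. -/
def faceComplex (𝓕 : Finset (Finset ι)) : Finset (Finset ι) := 𝓕.biUnion powerset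

@[simp]
lemma mem_faceComplex {𝓕 : Finset (Finset ι)} {G : Finset ι} :
    G ∈ faceComplex 𝓕 ↔ ∃ F ∈ 𝓕, G ⊆ F := by
  simp [faceComplex]

/-- A partitioning of the complex generated by `𝓕`: each face lies in exactly one of the intervals
`[A F, F]` with `F ∈ 𝓕`. -/
def IsPartitioning (𝓕 : Finset (Finset ι)) (A : Finset ι → Finset ι) : Prop :=
  ∀ G ∈ faceComplex 𝓕, ∃! F, F ∈ 𝓕 ∧ A F ⊆ G ∧ G ⊆ F

lemma IsPartitioning.congr {𝓕 : Finset (Finset ι)} {A B : Finset ι → Finset ι}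
    (hA : IsPartitioning 𝓕 A) (hAB : ∀ F ∈ 𝓕, A F = B F) : IsPartitioning 𝓕 B :=
  fun G hG ↦ (existsUnique_congr fun F ↦ and_congr_right fun hF ↦ by rw [hAB F hF]).1 (hA G hG)

lemma IsPartitioning.sum_faceComplex {M : Type*} [AddCommMonoid M] {𝓕 : Finset (Finset ι)}
    {A : Finset ι → Finset ι} (hA : IsPartitioning 𝓕 A) (g : Finset ι → M) :
    ∑ G ∈ faceComplex 𝓕, g G = ∑ F ∈ 𝓕, ∑ G ∈ Icc (A F) F, g G := by
  have sum_single (G) (hG : G ∈ faceComplex 𝓕) : g G = ∑ F ∈ 𝓕 with A F ⊆ G ∧ G ⊆ F, g G := by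
    obtain ⟨F, hF, unique⟩ := hA G hG
    have : {F ∈ 𝓕 | A F ⊆ G ∧ G ⊆ F} = {F} := by
      ext F'
      simp only [mem_filter, mem_singleton]
      exact ⟨unique F', fun h ↦ h ▸ hF⟩
    rw [this, sum_singleton]
  rw [sum_congr rfl sum_single]
  refine sum_comm' fun G F ↦ ?_
  simp only [mem_filter, mem_Icc, mem_faceComplex]
  grind

lemma sum_faceComplex_neg_one_pow_mul_choose {n : ℕ} {𝓕 : Finset (Finset ι)}
    {A : Finset ι → Finset ι} (card_eq : ∀ F ∈ 𝓕, #F = n) (hAF : ∀ F ∈ 𝓕, A F ⊆ F)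
    (hA : IsPartitioning 𝓕 A) (hA' : IsPartitioning 𝓕 fun F ↦ F \ A F) (m : ℕ) :
    ∑ G ∈ faceComplex 𝓕, (-1 : R) ^ #G * (#G).choose m
      = (-1) ^ n * #{G ∈ faceComplex 𝓕 | #G = m} := by
  calc ∑ G ∈ faceComplex 𝓕, (-1 : R) ^ #G * (#G).choose m
      = ∑ F ∈ 𝓕, ∑ G ∈ Icc (A F) F, (-1) ^ #G * ((#G).choose m : R) := hA.sum_faceComplex _
    _ = ∑ F ∈ 𝓕, ∑ H ∈ Icc (F \ A F) F, if #H = m then (-1) ^ n else 0 :=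
        sum_congr rfl fun F hF ↦ by
          rw [sum_Icc_neg_one_pow_card_mul_choose (hAF F hF), card_eq F hF]
    _ = ∑ H ∈ faceComplex 𝓕, if #H = m then (-1) ^ n else 0 := (hA'.sum_faceComplex _).symm
    _ = (-1) ^ n * #{G ∈ faceComplex 𝓕 | #G = m} := by
        rw [← sum_filter, sum_const, nsmul_eq_mul, mul_comm]

end Combinatorics

/-! ### Complete simplicial fans -/

/-- The face fan of a simplicial polytope around an interior point, abstractly: a complete
simplicial fan with rays `ray v` whose maximal cones are spanned by the members of `cones`, where
the hyperplane through the ray generators of one maximal cone has all other ray generators strictly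
on the side of the origin. `coord F v` is the coordinate along `ray v` in the basis given by `F`;
its values for `F ∉ cones` or `v ∉ F` carry no meaning. -/
structure PolytopalFan (𝕜 ι E : Type*) [Field 𝕜] [LinearOrder 𝕜] [DecidableEq ι]
    [AddCommGroup E] [Module 𝕜 E] where
  ray : ι → E
  cones : Finset (Finset ι)
  coord : Finset ι → ι → Module.Dual 𝕜 E
  sum_coord_smul_ray : ∀ F ∈ cones, ∀ x, ∑ v ∈ F, coord F v x • ray v = x
  coord_ray : ∀ F ∈ cones, ∀ v ∈ F, ∀ w ∈ F, coord F v (ray w) = if v = w then 1 else 0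
  sum_coord_ray_lt_one : ∀ F ∈ cones, ∀ F' ∈ cones, ∀ v ∈ F', v ∉ F →
    ∑ w ∈ F, coord F w (ray v) < 1
  exists_coord_nonneg : ∀ x, ∃ F ∈ cones, ∀ v ∈ F, 0 ≤ coord F v x

namespace PolytopalFan

open Finset Filter

variable {𝕜 ι E : Type*} [Field 𝕜] [LinearOrder 𝕜] [DecidableEq ι]
  [AddCommGroup E] [Module 𝕜 E] (Φ : PolytopalFan 𝕜 ι E) {F F' G : Finset ι} {c x : E}

/-- The linear functional with value `1` on the ray generators of the cone `F`. -/
def height (F : Finset ι) : Module.Dual 𝕜 E := ∑ v ∈ F, Φ.coord F v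

/-- The generators of the cone `F` along which `c` has positive coordinate. -/
def positivePart (c : E) (F : Finset ι) : Finset ι := {v ∈ F | 0 < Φ.coord F v c}

/-- A vector on no hyperplane spanned by a wall of the fan. -/
def IsGeneric (c : E) : Prop := ∀ F ∈ Φ.cones, ∀ v ∈ F, Φ.coord F v c ≠ 0

lemma height_apply (F : Finset ι) (x : E) : Φ.height F x = ∑ v ∈ F, Φ.coord F v x :=
  LinearMap.sum_apply ..

lemma height_eq_sum_coord_mul (hF : F ∈ Φ.cones) (F' : Finset ι) (x : E) :
    Φ.height F' x = ∑ v ∈ F, Φ.coord F v x * Φ.height F' (Φ.ray v) := by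
  conv_lhs => rw [← Φ.sum_coord_smul_ray F hF x]
  simp

lemma height_ray (hF : F ∈ Φ.cones) {v : ι} (hv : v ∈ F) : Φ.height F (Φ.ray v) = 1 := by
  rw [height_apply, sum_congr rfl fun w hw ↦ Φ.coord_ray F hF w hw v hv]
  simp [hv]

lemma height_ray_lt_one (hF : F ∈ Φ.cones) (hF' : F' ∈ Φ.cones) {v : ι} (hv : v ∈ F')
    (hvF : v ∉ F) : Φ.height F (Φ.ray v) < 1 :=
  (Φ.height_apply F _).trans_lt (Φ.sum_coord_ray_lt_one F hF F' hF' v hv hvF)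

lemma height_ray_le_one (hF : F ∈ Φ.cones) (hF' : F' ∈ Φ.cones) {v : ι} (hv : v ∈ F') :
    Φ.height F (Φ.ray v) ≤ 1 := by
  by_cases hvF : v ∈ F
  · exact (Φ.height_ray hF hvF).le
  · exact (Φ.height_ray_lt_one hF hF' hv hvF).le

lemma height_sum_ray (hF : F ∈ Φ.cones) (hGF : G ⊆ F) : Φ.height F (∑ w ∈ G, Φ.ray w) = #G := by
  rw [map_sum, sum_congr rfl fun w hw ↦ Φ.height_ray hF (hGF hw)]
  simp

lemma coord_smul_sum_ray_sub (hF : F ∈ Φ.cones) (hGF : G ⊆ F) (N : 𝕜) (c : E) {v : ι}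
    (hv : v ∈ F) :
    Φ.coord F v (N • ∑ w ∈ G, Φ.ray w - c) = (if v ∈ G then N else 0) - Φ.coord F v c := by
  have : ∑ w ∈ G, Φ.coord F v (Φ.ray w) = if v ∈ G then 1 else 0 := by
    rw [sum_congr rfl fun w hw ↦ Φ.coord_ray F hF v hv w (hGF hw)]
    simp
  rw [map_sub, map_smul, map_sum, this]
  simp

lemma linearIndependent_ray (hF : F ∈ Φ.cones) :
    LinearIndependent 𝕜 fun v : F ↦ Φ.ray v :=
  .of_pairwise_dual_eq_zero_one (fun v : F ↦ Φ.ray v) (fun v ↦ Φ.coord F v)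
    (fun v w hvw ↦ by simpa [Subtype.coe_inj, hvw] using Φ.coord_ray F hF v v.2 w w.2)
    fun v ↦ by simp [Φ.coord_ray F hF v v.2 v v.2]

lemma card_of_mem_cones (hF : F ∈ Φ.cones) : #F = Module.finrank 𝕜 E := by
  have span_eq_top : ⊤ ≤ Submodule.span 𝕜 (Set.range fun v : F ↦ Φ.ray v) := fun x _ ↦ by
    rw [← Φ.sum_coord_smul_ray F hF x]
    exact sum_mem fun v hv ↦ Submodule.smul_mem _ _ (Submodule.subset_span ⟨⟨v, hv⟩, rfl⟩)
  rw [Module.finrank_eq_card_basis (.mk (Φ.linearIndependent_ray hF) span_eq_top),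
    Fintype.card_coe]

variable [IsStrictOrderedRing 𝕜]

lemma sdiff_positivePart (hc : Φ.IsGeneric c) (hF : F ∈ Φ.cones) :
    F \ Φ.positivePart c F = Φ.positivePart (-c) F := by
  ext v
  simp only [positivePart, Finset.mem_sdiff, mem_filter, map_neg, neg_pos]
  have : v ∈ F → Φ.coord F v c ≠ 0 := hc F hF v
  grind

lemma height_sum_ray_lt (hF : F ∈ Φ.cones) (hF' : F' ∈ Φ.cones) (hGF' : G ⊆ F') (hGF : ¬G ⊆ F) :
    Φ.height F (∑ w ∈ G, Φ.ray w) < #G := by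
  obtain ⟨v, hvG, hvF⟩ := not_subset.1 hGF
  rw [map_sum, card_eq_sum_ones, Nat.cast_sum, Nat.cast_one]
  exact sum_lt_sum (fun w hw ↦ Φ.height_ray_le_one hF hF' (hGF' hw))
    ⟨v, hvG, Φ.height_ray_lt_one hF hF' (hGF' hvG) hvF⟩

lemma height_le_height (hF : F ∈ Φ.cones) (hF' : F' ∈ Φ.cones)
    (hx : ∀ v ∈ F, 0 ≤ Φ.coord F v x) : Φ.height F' x ≤ Φ.height F x := by
  rw [Φ.height_eq_sum_coord_mul hF F', Φ.height_apply]
  exact sum_le_sum fun v hv ↦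
    mul_le_of_le_one_right (hx v hv) (Φ.height_ray_le_one hF' hF hv)

lemma subset_of_coord_pos_of_coord_nonneg (hF : F ∈ Φ.cones) (hF' : F' ∈ Φ.cones)
    (hx : ∀ v ∈ F, 0 < Φ.coord F v x) (hx' : ∀ v ∈ F', 0 ≤ Φ.coord F' v x) : F ⊆ F' := by
  by_contra h
  obtain ⟨v, hvF, hvF'⟩ := not_subset.1 h
  have : Φ.height F' x < Φ.height F x := by
    rw [Φ.height_eq_sum_coord_mul hF F', Φ.height_apply]
    exact sum_lt_sum
      (fun w hw ↦ mul_le_of_le_one_right (hx w hw).le (Φ.height_ray_le_one hF' hF hw))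
      ⟨v, hvF, mul_lt_of_lt_one_right (hx v hvF) (Φ.height_ray_lt_one hF' hF hvF hvF')⟩
  exact this.not_ge (Φ.height_le_height hF' hF hx')

lemma exists_isGeneric : ∃ c, Φ.IsGeneric c := by
  obtain ⟨c, hc⟩ := Module.Dual.exists_forall_ne_zero_of_forall_exists
    (fun i : Σ F : Φ.cones, (F : Finset ι) ↦ Φ.coord i.1 i.2) fun i ↦ ⟨Φ.ray i.2, by
      rw [Φ.coord_ray i.1 i.1.2 i.2 i.2.2 i.2 i.2.2]
      simp⟩
  exact ⟨c, fun F hF v hv ↦ hc ⟨⟨F, hF⟩, v, hv⟩⟩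

lemma eventually_subset_of_coord_nonneg (hF' : F' ∈ Φ.cones) (hGF' : G ⊆ F') (c : E) :
    ∀ᶠ N : 𝕜 in atTop, ∀ F ∈ Φ.cones,
      (∀ v ∈ F, 0 ≤ Φ.coord F v (N • ∑ w ∈ G, Φ.ray w - c)) → G ⊆ F := by
  rw [eventually_all_finset]
  intro F hF
  by_cases hGF : G ⊆ F
  · exact .of_forall fun _ _ ↦ hGF
  have gap : 0 < #G - Φ.height F (∑ w ∈ G, Φ.ray w) :=
    sub_pos.2 (Φ.height_sum_ray_lt hF hF' hGF' hGF)
  filter_upwards [eventually_gt_atTop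
    ((Φ.height F' c - Φ.height F c) / (#G - Φ.height F (∑ w ∈ G, Φ.ray w)))] with N hN hcone
  have hle := Φ.height_le_height hF hF' hcone
  simp only [map_sub, map_smul, smul_eq_mul, Φ.height_sum_ray hF' hGF'] at hle
  rw [div_lt_iff₀ gap] at hN
  linarith

lemma coord_smul_sum_ray_sub_pos_iff (hF : F ∈ Φ.cones) (hc : Φ.IsGeneric c) (hGF : G ⊆ F) {N : 𝕜}
    (hN : ∀ v ∈ F, Φ.coord F v c < N) :
    (∀ v ∈ F, 0 < Φ.coord F v (N • ∑ w ∈ G, Φ.ray w - c)) ↔ Φ.positivePart c F ⊆ G := by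
  have h (v) (hv : v ∈ F) :
      0 < Φ.coord F v (N • ∑ w ∈ G, Φ.ray w - c) ↔ (0 < Φ.coord F v c → v ∈ G) := by
    rw [Φ.coord_smul_sum_ray_sub hF hGF N c hv]
    have := hN v hv
    have := hc F hF v hv
    grind
  simp only [positivePart, subset_iff, mem_filter, and_imp]
  exact forall₂_congr h

lemma coord_smul_sum_ray_sub_ne_zero (hF : F ∈ Φ.cones) (hc : Φ.IsGeneric c) (hGF : G ⊆ F) {N : 𝕜}
    (hN : ∀ v ∈ F, Φ.coord F v c < N) {v : ι} (hv : v ∈ F) :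
    Φ.coord F v (N • ∑ w ∈ G, Φ.ray w - c) ≠ 0 := by
  rw [Φ.coord_smul_sum_ray_sub hF hGF N c hv]
  have := hN v hv
  have := hc F hF v hv
  grind

-- The vector `N • ∑ w ∈ G, ray w - c` with `N` large is generic and close to the cone over `G`, so
-- it lies in a single maximal cone; that cone contains `G`, and `F ⊇ G` is that cone if and only if
-- `positivePart c F ⊆ G`.
theorem isPartitioning_positivePart (hc : Φ.IsGeneric c) :
    IsPartitioning Φ.cones (Φ.positivePart c) := by
  intro G hG
  obtain ⟨F₀, hF₀, hGF₀⟩ := mem_faceComplex.1 hG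
  have coord_lt : ∀ᶠ N : 𝕜 in atTop, ∀ F ∈ Φ.cones, ∀ v ∈ F, Φ.coord F v c < N := by
    simp only [eventually_all_finset]
    exact fun F _ v _ ↦ eventually_gt_atTop _
  obtain ⟨N, subset_of_nonneg, hN⟩ :=
    ((Φ.eventually_subset_of_coord_nonneg hF₀ hGF₀ c).and coord_lt).exists
  obtain ⟨F, hF, nonneg⟩ := Φ.exists_coord_nonneg (N • ∑ w ∈ G, Φ.ray w - c)
  have hGF : G ⊆ F := subset_of_nonneg F hF nonneg
  have pos (v) (hv : v ∈ F) := (nonneg v hv).lt_of_ne'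
    (Φ.coord_smul_sum_ray_sub_ne_zero hF hc hGF (hN F hF) hv)
  refine ⟨F, ⟨hF, (Φ.coord_smul_sum_ray_sub_pos_iff hF hc hGF (hN F hF)).1 pos, hGF⟩, ?_⟩
  rintro F' ⟨hF', positivePart_subset, hGF'⟩
  have pos' := (Φ.coord_smul_sum_ray_sub_pos_iff hF' hc hGF' (hN F' hF')).2 positivePart_subset
  exact (Φ.subset_of_coord_pos_of_coord_nonneg hF' hF pos' nonneg).antisymm
    (Φ.subset_of_coord_pos_of_coord_nonneg hF hF' pos fun v hv ↦ (pos' v hv).le)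

theorem sum_neg_one_pow_card_mul_choose {R : Type*} [CommRing R] (m : ℕ) :
    ∑ G ∈ faceComplex Φ.cones, (-1 : R) ^ #G * (#G).choose m
      = (-1) ^ Module.finrank 𝕜 E * #{G ∈ faceComplex Φ.cones | #G = m} := by
  obtain ⟨c, hc⟩ := Φ.exists_isGeneric
  have hneg : Φ.IsGeneric (-c) := fun F hF v hv ↦ by simpa using hc F hF v hv
  exact sum_faceComplex_neg_one_pow_mul_choose (fun F hF ↦ Φ.card_of_mem_cones hF)
    (fun F _ ↦ filter_subset _ F) (Φ.isPartitioning_positivePart hc)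
    ((Φ.isPartitioning_positivePart hneg).congr fun F hF ↦ (Φ.sdiff_positivePart hc hF).symm) m

end PolytopalFan

/-! ### Exposed faces of polytopes -/

section ExposedFaces

open Set Filter Topology

lemma exists_add_mul_nonpos_eq_zero {ι 𝕜 : Type*} [Field 𝕜] [LinearOrder 𝕜] [IsStrictOrderedRing 𝕜]
    {V : Finset ι} {f g : ι → 𝕜} (hf : ∀ w ∈ V, f w ≤ 0) (hg : ∃ w ∈ V, 0 < g w) :
    ∃ t, 0 ≤ t ∧ (∀ w ∈ V, f w + t * g w ≤ 0) ∧ ∃ w ∈ V, 0 < g w ∧ f w + t * g w = 0 := by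
  obtain ⟨w₀, hw₀, ratio_le⟩ := Finset.exists_min_image {w ∈ V | 0 < g w} (fun w ↦ -f w / g w)
    (by simpa [Finset.Nonempty] using hg)
  obtain ⟨hw₀V, hgw₀⟩ := Finset.mem_filter.1 hw₀
  have ratio_nonneg : 0 ≤ -f w₀ / g w₀ := div_nonneg (neg_nonneg.2 (hf w₀ hw₀V)) hgw₀.le
  refine ⟨-f w₀ / g w₀, ratio_nonneg, fun w hw ↦ ?_, w₀, hw₀V, hgw₀, by field_simp; simp⟩
  rcases lt_or_ge 0 (g w) with hgw | hgw
  · have := (le_div_iff₀ hgw).1 (ratio_le w (Finset.mem_filter.2 ⟨hw, hgw⟩))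
    linarith
  · linarith [hf w hw, mul_nonpos_of_nonneg_of_nonpos ratio_nonneg hgw]

lemma exists_dual_apply_eq_of_linearIndependent {ι 𝕜 M : Type*} [Field 𝕜] [AddCommGroup M]
    [Module 𝕜 M] {b : ι → M} (hb : LinearIndependent 𝕜 b) (g : ι → 𝕜) :
    ∃ f : Module.Dual 𝕜 M, ∀ i, f (b i) = g i := by
  obtain ⟨f, hf⟩ := ((Module.Basis.span hb).constr 𝕜 g).exists_extend
  refine ⟨f, fun i ↦ ?_⟩
  have := congr($hf (Module.Basis.span hb i))
  rwa [Module.Basis.constr_basis, LinearMap.comp_apply, Submodule.subtype_apply,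
    Module.Basis.span_apply] at this

variable {E : Type*} [NormedAddCommGroup E] [NormedSpace ℝ E] {S V F G : Set E}
  {l m : StrongDual ℝ E} {x y : E} {a : ℝ}

lemma mem_toExposed_iff_apply_eq (hx : x ∈ l.toExposed S) :
    y ∈ l.toExposed S ↔ y ∈ S ∧ l y = l x :=
  ⟨fun hy ↦ ⟨hy.1, (hx.2 y hy.1).antisymm (hy.2 x hx.1)⟩, fun hy ↦ ⟨hy.1, hy.2 ▸ hx.2⟩⟩

lemma apply_le_of_mem_convexHull (h : ∀ w ∈ V, l w ≤ a) (hx : x ∈ convexHull ℝ V) : l x ≤ a :=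
  convexHull_min h (convex_halfSpace_le l.toLinearMap.isLinear a) hx

lemma apply_lt_of_mem_interior (hl : l ≠ 0) (h : ∀ y ∈ S, l y ≤ a) (hx : x ∈ interior S) :
    l x < a := by
  have : l '' interior S ⊆ interior (Iic a) :=
    ((l.isOpenMap_of_ne_zero hl).image_interior_subset S).trans
      (interior_mono (image_subset_iff.2 h))
  rw [interior_Iic] at this
  exact this (mem_image_of_mem l hx)

lemma vectorSpan_toExposed_le_ker (l : StrongDual ℝ E) (S : Set E) :
    vectorSpan ℝ (l.toExposed S) ≤ l.ker := by
  rw [vectorSpan_def, Submodule.span_le]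
  rintro _ ⟨y, hy, x, hx, rfl⟩
  simp [((mem_toExposed_iff_apply_eq hx).1 hy).2]

lemma apply_eq_of_vectorSpan_le_ker (h : vectorSpan ℝ S ≤ l.ker) (hx : x ∈ S) (hy : y ∈ S) :
    l y = l x :=
  sub_eq_zero.1 ((map_sub l y x).symm.trans (h (vsub_mem_vectorSpan ℝ hy hx)))

lemma toExposed_subset_toExposed_add_smul (h : vectorSpan ℝ (l.toExposed S) ≤ m.ker) {t : ℝ}
    (hx : x ∈ l.toExposed S) (hx' : x ∈ (l + t • m).toExposed S) :
    l.toExposed S ⊆ (l + t • m).toExposed S := fun y hy ↦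
  (mem_toExposed_iff_apply_eq hx').2 ⟨hy.1, by
    simp [((mem_toExposed_iff_apply_eq hx).1 hy).2, apply_eq_of_vectorSpan_le_ker h hx hy]⟩

lemma exists_apply_ne_of_interior_nonempty (hV : (interior (convexHull ℝ V)).Nonempty) (hl : l ≠ 0)
    (x : E) : ∃ w ∈ V, l w ≠ l x := by
  by_contra! h
  obtain ⟨z, hz⟩ := hV
  have lt := apply_lt_of_mem_interior hl
    (fun y ↦ apply_le_of_mem_convexHull fun w hw ↦ (h w hw).le) hz
  have le := apply_le_of_mem_convexHull (l := -l) (a := -l x) (fun w hw ↦ by simp [h w hw])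
    (interior_subset hz)
  exact lt.not_ge (neg_le_neg_iff.1 le)

lemma exists_dual_le_ker_apply_lt [FiniteDimensional ℝ E] {W W' : Submodule ℝ E} (hW : W < W')
    (hV : (interior (convexHull ℝ V)).Nonempty) (x : E) :
    ∃ m : StrongDual ℝ E, W ≤ m.ker ∧ (∃ e ∈ W', m e ≠ 0) ∧ ∃ w ∈ V, m x < m w := by
  obtain ⟨e, heW', heW⟩ := SetLike.exists_of_lt hW
  obtain ⟨f, hfe, hWf⟩ := Submodule.exists_le_ker_of_notMem heW
  set m := f.toContinuousLinearMap
  have hWm : W ≤ m.ker := hWf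
  have hme : m e ≠ 0 := hfe
  have hm : m ≠ 0 := fun h ↦ hme (by simp [h])
  obtain ⟨w, hw, hne⟩ := exists_apply_ne_of_interior_nonempty hV hm x
  rcases hne.lt_or_gt with hlt | hgt
  · exact ⟨-m, fun v hv ↦ by simpa using hWm hv, ⟨e, heW', by simpa using hme⟩, w, hw, by simpa⟩
  · exact ⟨m, hWm, ⟨e, heW', hme⟩, w, hw, hgt⟩

-- Rotate the supporting hyperplane around the face until it meets a further vertex.
lemma exists_vectorSpan_toExposed_lt [FiniteDimensional ℝ E] (hV : V.Finite)
    (hint : (interior (convexHull ℝ V)).Nonempty) (hx : x ∈ l.toExposed (convexHull ℝ V))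
    (hlt : vectorSpan ℝ (l.toExposed (convexHull ℝ V)) < l.ker) :
    ∃ l' : StrongDual ℝ E, l' ≠ 0 ∧
      l.toExposed (convexHull ℝ V) ⊆ l'.toExposed (convexHull ℝ V) ∧
      vectorSpan ℝ (l.toExposed (convexHull ℝ V))
        < vectorSpan ℝ (l'.toExposed (convexHull ℝ V)) := by
  obtain ⟨m, vectorSpan_le_ker, ⟨e, hle, hme⟩, m_lt⟩ := exists_dual_le_ker_apply_lt hlt hint x
  obtain ⟨t, -, nonpos, w, hwV, hmw, hw⟩ := exists_add_mul_nonpos_eq_zero (V := hV.toFinset)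
    (f := fun w ↦ l w - l x) (g := fun w ↦ m w - m x)
    (fun w hw ↦ sub_nonpos.2 (hx.2 w (subset_convexHull ℝ V (hV.mem_toFinset.1 hw))))
    (by simpa using m_lt)
  have hwV : w ∈ convexHull ℝ V := subset_convexHull ℝ V (hV.mem_toFinset.1 hwV)
  have ht : t ≠ 0 := by
    rintro rfl
    have : m w = m x := apply_eq_of_vectorSpan_le_ker vectorSpan_le_ker hx
      ((mem_toExposed_iff_apply_eq hx).2 ⟨hwV, by linarith⟩)
    linarith
  have hx' : x ∈ (l + t • m).toExposed (convexHull ℝ V) := by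
    refine ⟨hx.1, fun y ↦ apply_le_of_mem_convexHull fun w hw ↦ ?_⟩
    have := nonpos w (hV.mem_toFinset.2 hw)
    simp only [add_apply, smul_apply, smul_eq_mul]
    linarith
  have hsub := toExposed_subset_toExposed_add_smul vectorSpan_le_ker hx hx'
  have hw' : w ∈ (l + t • m).toExposed (convexHull ℝ V) :=
    (mem_toExposed_iff_apply_eq hx').2
      ⟨hwV, by simp only [add_apply, smul_apply, smul_eq_mul]; linarith⟩
  refine ⟨l + t • m, fun h ↦ ?_, hsub, (vectorSpan_mono ℝ hsub).lt_of_not_ge fun hge ↦ ?_⟩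
  · have : l e + t * m e = 0 := congr($h e)
    simp_all
  · have := apply_eq_of_vectorSpan_le_ker (hge.trans vectorSpan_le_ker) hx' hw'
    linarith

theorem exists_toExposed_subset_vectorSpan_eq_ker [FiniteDimensional ℝ E] (hV : V.Finite)
    (hint : (interior (convexHull ℝ V)).Nonempty) (hl : l ≠ 0)
    (hx : x ∈ l.toExposed (convexHull ℝ V)) :
    ∃ l' : StrongDual ℝ E, l' ≠ 0 ∧
      l.toExposed (convexHull ℝ V) ⊆ l'.toExposed (convexHull ℝ V) ∧
      vectorSpan ℝ (l'.toExposed (convexHull ℝ V)) = l'.ker := by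
  induction hW : vectorSpan ℝ (l.toExposed (convexHull ℝ V)) using WellFoundedGT.induction
    generalizing l with
  | ind W ih =>
    rcases (vectorSpan_toExposed_le_ker l (convexHull ℝ V)).eq_or_lt with heq | hlt
    · exact ⟨l, hl, subset_rfl, heq⟩
    · obtain ⟨l₁, hl₁, hsub, hlt₁⟩ := exists_vectorSpan_toExposed_lt hV hint hx hlt
      obtain ⟨l', hl', hsub', heq⟩ := ih _ (hW ▸ hlt₁) hl₁ (hsub hx) rfl
      exact ⟨l', hl', hsub.trans hsub', heq⟩

lemma exists_pos_mul_le_half {ι : Type*} {V : Set ι} (hV : V.Finite) {f g : ι → ℝ}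
    (hg : ∀ w ∈ V, 0 ≤ g w) (hf : ∀ w ∈ V, g w = 0 → f w ≤ 0) :
    ∃ ε > 0, ∀ w ∈ V, ε * f w ≤ g w / 2 := by
  have : ∀ᶠ ε : ℝ in 𝓝[>] 0, ∀ w ∈ V, ε * f w ≤ g w / 2 := by
    rw [eventually_all_finite hV]
    intro w hw
    rcases (hg w hw).eq_or_lt with h0 | hpos
    · filter_upwards [self_mem_nhdsWithin] with ε hε
      simpa [← h0] using mul_nonpos_of_nonneg_of_nonpos (le_of_lt hε) (hf w hw h0.symm)
    · have : Tendsto (fun ε : ℝ ↦ ε * f w) (𝓝[>] 0) (𝓝 (0 * f w)) :=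
        (tendsto_id.mul_const _).mono_left nhdsWithin_le_nhds
      exact this.eventually_le_const (by simpa using hpos)
  exact (eventually_mem_nhdsWithin.and this).exists

-- If `l` exposes `F` and `m` exposes `G` in `F`, then `l + ε • m` exposes `G` for small `ε > 0`.
lemma isExposed_trans_of_finite (hV : V.Finite) (hF : IsExposed ℝ (convexHull ℝ V) F)
    (hG : IsExposed ℝ F G) : IsExposed ℝ (convexHull ℝ V) G := by
  rintro ⟨x, hxG⟩
  have hxF : x ∈ F := hG.subset hxG
  obtain ⟨m, rfl⟩ := hG ⟨x, hxG⟩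
  obtain ⟨l, rfl⟩ := hF ⟨x, hxF⟩
  change x ∈ l.toExposed _ at hxF
  change x ∈ m.toExposed (l.toExposed _) at hxG
  change ∃ l' : StrongDual ℝ E, m.toExposed (l.toExposed _) = l'.toExposed _
  obtain ⟨ε, hε, hle⟩ := exists_pos_mul_le_half hV (f := fun w ↦ m w - m x)
    (g := fun w ↦ l x - l w) (fun w hw ↦ sub_nonneg.2 (hxF.2 w (subset_convexHull ℝ V hw)))
    fun w hw h ↦ sub_nonpos.2 (hxG.2 w ((mem_toExposed_iff_apply_eq hxF).2
      ⟨subset_convexHull ℝ V hw, (sub_eq_zero.1 h).symm⟩))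
  have hle {y} (hy : y ∈ convexHull ℝ V) : ε * (m y - m x) ≤ (l x - l y) / 2 := by
    have := apply_le_of_mem_convexHull (l := ε • m + (2⁻¹ : ℝ) • l) (a := ε * m x + l x / 2)
      (fun w hw ↦ by
        have := hle w hw
        simp only [add_apply, smul_apply, smul_eq_mul]
        linarith) hy
    simp only [add_apply, smul_apply, smul_eq_mul] at this
    linarith
  have hx : x ∈ (l + ε • m).toExposed (convexHull ℝ V) :=
    ⟨hxF.1, fun y hy ↦ by
      simp only [add_apply, smul_apply, smul_eq_mul]
      linarith [hle hy, hxF.2 y hy]⟩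
  refine ⟨l + ε • m, Set.ext fun y ↦ ?_⟩
  rw [mem_toExposed_iff_apply_eq hxG, mem_toExposed_iff_apply_eq hxF, mem_toExposed_iff_apply_eq hx,
    and_assoc]
  refine and_congr_right fun hy ↦ ⟨fun h ↦ by simp [h], fun h ↦ ?_⟩
  simp only [add_apply, smul_apply, smul_eq_mul] at h
  have hly : l y = l x := by linarith [hle hy, hxF.2 y hy]
  exact ⟨hly, mul_left_cancel₀ hε.ne' (by linarith)⟩

theorem convexHull_inter_eq_of_isExposed (hV : V.Finite) (hF : IsExposed ℝ (convexHull ℝ V) F) :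
    convexHull ℝ (V ∩ F) = F := by
  have convex_F : Convex ℝ F := hF.convex (convex_convexHull ℝ V)
  have compact_F : IsCompact F := hF.isCompact (hV.isCompact_convexHull ℝ)
  have extremePoints_subset : F.extremePoints ℝ ⊆ V ∩ F := by
    rw [hF.isExtreme.extremePoints_eq]
    exact fun v hv ↦ ⟨extremePoints_convexHull_subset hv.2, hv.1⟩
  refine (convexHull_min inter_subset_right convex_F).antisymm ?_
  calc F = closure (convexHull ℝ (F.extremePoints ℝ)) :=
        (closure_convexHull_extremePoints compact_F convex_F).symm
    _ ⊆ closure (convexHull ℝ (V ∩ F)) := by gcongr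
    _ = convexHull ℝ (V ∩ F) := ((hV.inter_of_left F).isCompact_convexHull ℝ).isClosed.closure_eq

theorem isExposed_convexHull_of_subset_of_affineIndependent [FiniteDimensional ℝ E] (hV : V.Finite)
    (hind : AffineIndependent ℝ ((↑) : V → E)) (hG : G ⊆ V) :
    IsExposed ℝ (convexHull ℝ V) (convexHull ℝ G) := by
  classical
  rcases G.eq_empty_or_nonempty with rfl | ⟨x, hxG⟩
  · simpa using isExposed_empty
  obtain ⟨f, hf⟩ := exists_dual_apply_eq_of_linearIndependent
    ((affineIndependent_iff_linearIndependent_vsub ℝ _ ⟨x, hG hxG⟩).1 hind)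
    fun v ↦ if (v : E) ∈ G then 0 else -1
  set l := f.toContinuousLinearMap
  have hl (v : E) (hv : v ∈ V) : l v - l x = if v ∈ G then 0 else -1 := by
    by_cases hvx : v = x
    · simp [hvx, hxG]
    · exact (map_sub f v x).symm.trans (hf ⟨⟨v, hv⟩, by simpa using hvx⟩)
  have hx : x ∈ l.toExposed (convexHull ℝ V) := by
    refine ⟨subset_convexHull ℝ V (hG hxG), fun y ↦ apply_le_of_mem_convexHull fun w hw ↦ ?_⟩
    have := hl w hw
    grind
  have hGV : V ∩ l.toExposed (convexHull ℝ V) = G := by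
    ext v
    rw [mem_inter_iff, mem_toExposed_iff_apply_eq hx, ← sub_eq_zero]
    refine ⟨fun ⟨hv, _, hlv⟩ ↦ ?_, fun hv ↦ ⟨hG hv, subset_convexHull ℝ V (hG hv), ?_⟩⟩
    · by_contra hvG
      simp [hl v hv, hvG] at hlv
    · simp [hl v (hG hv), hv]
  rw [← hGV, convexHull_inter_eq_of_isExposed hV ContinuousLinearMap.toExposed.isExposed]
  exact ContinuousLinearMap.toExposed.isExposed

lemma mem_of_mem_convexHull_of_mem_extremePoints (hVS : convexHull ℝ V ⊆ S)
    (hx : x ∈ S.extremePoints ℝ) (hxV : x ∈ convexHull ℝ V) : x ∈ V :=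
  extremePoints_convexHull_subset
    (inter_extremePoints_subset_extremePoints_of_subset hVS ⟨hxV, hx⟩)

lemma exists_pos_add_smul_mem_frontier (hS : Bornology.IsBounded S) (hx : x ∈ interior S)
    (hy : y ≠ 0) : ∃ t > (0 : ℝ), x + t • y ∈ frontier S := by
  let γ (r : ℝ) : E := x + Real.exp r • y
  have hγ : Continuous γ := by fun_prop
  have nonempty : (γ ⁻¹' S).Nonempty := by
    have : Tendsto γ atBot (𝓝 (x + (0 : ℝ) • y)) :=
      (Real.tendsto_exp_atBot.smul_const y).const_add x
    rw [zero_smul, add_zero] at this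
    exact (this.eventually_mem (mem_interior_iff_mem_nhds.1 hx)).exists
  have ne_univ : γ ⁻¹' S ≠ univ := by
    intro h
    have : Tendsto (fun r ↦ ‖γ r‖) atTop atTop := by
      refine tendsto_atTop_mono (fun r ↦ ?_) (tendsto_atTop_add_const_right _ (-‖x‖)
        (Real.tendsto_exp_atTop.atTop_mul_const (norm_pos_iff.2 hy)))
      have := norm_sub_le (γ r) x
      rw [add_sub_cancel_left, norm_smul, Real.norm_eq_abs, Real.abs_exp] at this
      linarith
    obtain ⟨C, hC⟩ := hS.exists_norm_le
    obtain ⟨r, hr⟩ := (this.eventually_gt_atTop C).exists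
    exact hr.not_ge (hC _ (h.ge (mem_univ r)))
  obtain ⟨r, hr⟩ := nonempty_frontier_iff.2 ⟨nonempty, ne_univ⟩
  exact ⟨Real.exp r, Real.exp_pos r, hγ.frontier_preimage_subset S hr⟩

end ExposedFaces

section ConeCoordinates

open Finset

variable {𝕜 ι E : Type*} [Field 𝕜] [AddCommGroup E] [Module 𝕜 E]

lemma linearIndependent_sub_of_affineIndependent {p : ι → E} (hp : AffineIndependent 𝕜 p)
    {l : Module.Dual 𝕜 E} {a : 𝕜} (hl : ∀ i, l (p i) = a) {z : E} (hz : l z ≠ a) :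
    LinearIndependent 𝕜 fun i ↦ p i - z := by
  rw [linearIndependent_iff']
  intro s g hg
  have sum_eq_zero : ∑ i ∈ s, g i = 0 := by
    have := congr(l $hg)
    simp only [map_sum, map_smul, map_sub, hl, smul_eq_mul, map_zero, ← sum_mul] at this
    exact (mul_eq_zero.1 this).resolve_right (sub_ne_zero.2 hz.symm)
  have sum_smul_eq_zero : ∑ i ∈ s, g i • p i = 0 := by
    simpa [smul_sub, sum_sub_distrib, ← sum_smul, sum_eq_zero] using hg
  exact affineIndependent_iff.1 hp s g sum_eq_zero sum_smul_eq_zero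

lemma exists_dual_sum_smul_eq_of_card_eq_finrank [FiniteDimensional 𝕜 E] [DecidableEq ι]
    {s : Finset ι} {u : ι → E} (hu : LinearIndependent 𝕜 fun i : s ↦ u i)
    (hcard : #s = Module.finrank 𝕜 E) :
    ∃ κ : ι → Module.Dual 𝕜 E, (∀ x, ∑ i ∈ s, κ i x • u i = x) ∧
      ∀ i ∈ s, ∀ j ∈ s, κ i (u j) = if i = j then 1 else 0 := by
  let b := Module.Basis.mk hu (hu.span_eq_top_of_card_eq_finrank' (by simpa using hcard)).ge
  have hb (i : s) : b i = u i := Module.Basis.mk_apply ..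
  refine ⟨fun i ↦ if hi : i ∈ s then b.coord ⟨i, hi⟩ else 0, fun x ↦ ?_, fun i hi j hj ↦ ?_⟩
  · conv_rhs => rw [← b.sum_repr x]
    rw [← sum_coe_sort s]
    exact sum_congr rfl fun i _ ↦ by simp [hb]
  · beta_reduce
    rw [dif_pos hi, ← hb ⟨j, hj⟩, Module.Basis.coord_apply, Module.Basis.repr_self_apply]
    simp [eq_comm]

end ConeCoordinates

/-! ### Simplicial polytopes -/

namespace ConvexPolytope

open Finset

variable {n : ℕ} {P : ConvexPolytope n} {s G : Finset (EuclideanSpace ℝ (Fin n))}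
  {l : StrongDual ℝ (EuclideanSpace ℝ (Fin n))} {v x z : EuclideanSpace ℝ (Fin n)}

/-- `s` is the vertex set of a facet of `P` that is a simplex. -/
def IsFacetVertexSet (P : ConvexPolytope n) (s : Finset (EuclideanSpace ℝ (Fin n))) : Prop :=
  #s = n ∧ AffineIndependent ℝ ((↑) : s → EuclideanSpace ℝ (Fin n)) ∧
    convexHull ℝ (s : Set (EuclideanSpace ℝ (Fin n))) ∈ P.faces (n - 1)

lemma sdim_carrier (P : ConvexPolytope n) : sdim P.carrier = n := by
  rw [sdim, carrier, ← direction_affineSpan, affineSpan_convexHull,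
    affineSpan_eq_top_of_nonempty_interior P.nonempty_int, AffineSubspace.direction_top,
    finrank_top, finrank_euclideanSpace_fin]

lemma ne_zero_of_sdim_toExposed_lt (h : sdim (l.toExposed P.carrier) < n) : l ≠ 0 := by
  rintro rfl
  have : (0 : StrongDual ℝ (EuclideanSpace ℝ (Fin n))).toExposed P.carrier = P.carrier := by
    simp [ContinuousLinearMap.toExposed]
  rw [this, sdim_carrier] at h
  exact h.false

lemma IsSimplicial.exists_isFacetVertexSet (hP : P.IsSimplicial) (hl : l ≠ 0)
    (hx : x ∈ l.toExposed P.carrier) : ∃ s, P.IsFacetVertexSet s ∧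
      l.toExposed P.carrier ⊆ convexHull ℝ (s : Set (EuclideanSpace ℝ (Fin n))) := by
  obtain ⟨l', hl', hsub, hspan⟩ :=
    exists_toExposed_subset_vectorSpan_eq_ker P.verts.finite_toSet P.nonempty_int hl hx
  have sdim_eq : sdim (l'.toExposed P.carrier) = n - 1 := by
    have := Module.Dual.finrank_ker_add_one_of_ne_zero (f := l'.toLinearMap) 
      (by exact_mod_cast hl')
    rw [finrank_euclideanSpace_fin] at this
    rw [sdim, carrier, hspan]
    omega
  have hface : l'.toExposed P.carrier ∈ P.faces (n - 1) :=
    ⟨ContinuousLinearMap.toExposed.isExposed, ⟨x, hsub hx⟩, sdim_eq⟩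
  obtain ⟨s, hcard, hind, heq⟩ := hP _ hface
  exact ⟨s, ⟨hcard, hind, heq ▸ hface⟩, heq ▸ hsub⟩

namespace IsFacetVertexSet

lemma pos (hs : P.IsFacetVertexSet s) : 0 < n := by
  have : s.Nonempty := by simpa using hs.2.2.2.1
  exact hs.1 ▸ this.card_pos

lemma exists_toExposed_eq (hs : P.IsFacetVertexSet s) :
    ∃ l : StrongDual ℝ (EuclideanSpace ℝ (Fin n)), l ≠ 0 ∧
      convexHull ℝ (s : Set (EuclideanSpace ℝ (Fin n))) = l.toExposed P.carrier := by
  obtain ⟨hexp, hne, hdim⟩ := hs.2.2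
  obtain ⟨l, hl⟩ := hexp hne
  change _ = l.toExposed P.carrier at hl
  refine ⟨l, ne_zero_of_sdim_toExposed_lt (P := P) ?_, hl⟩
  have : sdim (l.toExposed P.carrier) = n - 1 := hl ▸ hdim
  have := hs.pos
  omega

lemma isExposed_convexHull (hs : P.IsFacetVertexSet s) (hG : G ⊆ s) :
    IsExposed ℝ P.carrier (convexHull ℝ (G : Set (EuclideanSpace ℝ (Fin n)))) :=
  isExposed_trans_of_finite P.verts.finite_toSet hs.2.2.1
    (isExposed_convexHull_of_subset_of_affineIndependent s.finite_toSet hs.2.1 hG)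

lemma mem_extremePoints (hs : P.IsFacetVertexSet s) (hv : v ∈ s) :
    v ∈ P.carrier.extremePoints ℝ := by
  have := hs.isExposed_convexHull (singleton_subset_iff.2 hv)
  rw [coe_singleton, convexHull_singleton] at this
  exact isExtreme_singleton.1 this.isExtreme

lemma subset_verts (hs : P.IsFacetVertexSet s) : s ⊆ P.verts :=
  fun _ hv ↦ extremePoints_convexHull_subset (hs.mem_extremePoints hv)

open Classical in
lemma exists_coord (hs : P.IsFacetVertexSet s) (hz : z ∈ interior P.carrier) :
    ∃ κ : EuclideanSpace ℝ (Fin n) → Module.Dual ℝ (EuclideanSpace ℝ (Fin n)),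
      (∀ x, ∑ v ∈ s, κ v x • (v - z) = x) ∧
      (∀ v ∈ s, ∀ w ∈ s, κ v (w - z) = if v = w then 1 else 0) ∧
      ∀ x ∈ P.carrier, x ∉ convexHull ℝ (s : Set (EuclideanSpace ℝ (Fin n))) →
        ∑ v ∈ s, κ v (x - z) < 1 := by
  obtain ⟨l, hl, hull_eq⟩ := hs.exists_toExposed_eq
  obtain ⟨x₀, hx₀⟩ : (l.toExposed P.carrier).Nonempty := hull_eq ▸ hs.2.2.2.1
  have hls (v) (hv : v ∈ s) : l v = l x₀ :=
    ((mem_toExposed_iff_apply_eq hx₀).1 (hull_eq ▸ subset_convexHull ℝ _ hv)).2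
  have hlz : l z < l x₀ := apply_lt_of_mem_interior hl hx₀.2 hz
  have hind := linearIndependent_sub_of_affineIndependent hs.2.1 (l := l.toLinearMap)
    (fun v ↦ hls v v.2) hlz.ne
  obtain ⟨κ, sum_eq, kronecker⟩ := exists_dual_sum_smul_eq_of_card_eq_finrank
    (u := fun v ↦ v - z) hind (by rw [hs.1, finrank_euclideanSpace_fin])
  refine ⟨κ, sum_eq, kronecker, fun x hx hxs ↦ ?_⟩
  have hlx : l x < l x₀ := (hx₀.2 x hx).lt_of_ne fun h ↦
    hxs (hull_eq ▸ (mem_toExposed_iff_apply_eq hx₀).2 ⟨hx, h⟩)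
  have : (∑ v ∈ s, κ v (x - z)) * (l x₀ - l z) = l x - l z := by
    rw [← map_sub l x z]
    conv_rhs => rw [← sum_eq (x - z), map_sum]
    rw [sum_mul]
    exact sum_congr rfl fun v hv ↦ by rw [map_smul, smul_eq_mul, map_sub l v z, hls v hv]
  exact lt_of_mul_lt_mul_right (by linarith) (sub_pos.2 hlz).le

end IsFacetVertexSet

lemma IsSimplicial.exists_isFacetVertexSet_smul_sub_of_ne_zero (hP : P.IsSimplicial)
    (hz : z ∈ interior P.carrier) (hx : x ≠ 0) :
    ∃ s, P.IsFacetVertexSet s ∧ ∃ t : ℝ, 0 ≤ t ∧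
      ∃ p ∈ convexHull ℝ (s : Set (EuclideanSpace ℝ (Fin n))), x = t • (p - z) := by
  have hcompact : IsCompact P.carrier := P.verts.finite_toSet.isCompact_convexHull ℝ
  obtain ⟨t, ht, hfrontier⟩ := exists_pos_add_smul_mem_frontier hcompact.isBounded hz hx
  rw [hcompact.isClosed.frontier_eq] at hfrontier
  obtain ⟨l, hl, hle⟩ := geometric_hahn_banach_of_nonempty_interior_point
    (convex_convexHull ℝ _) hfrontier.2 P.nonempty_int
  obtain ⟨s, hs, hsub⟩ := hP.exists_isFacetVertexSet hl ⟨hfrontier.1, hle⟩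
  refine ⟨s, hs, t⁻¹, by positivity, z + t • x, hsub ⟨hfrontier.1, hle⟩, ?_⟩
  rw [add_sub_cancel_left, inv_smul_smul₀ ht.ne']

lemma IsSimplicial.exists_isFacetVertexSet_smul_sub (hP : P.IsSimplicial) (hn : 0 < n)
    (hz : z ∈ interior P.carrier) (x : EuclideanSpace ℝ (Fin n)) :
    ∃ s, P.IsFacetVertexSet s ∧ ∃ t : ℝ, 0 ≤ t ∧
      ∃ p ∈ convexHull ℝ (s : Set (EuclideanSpace ℝ (Fin n))), x = t • (p - z) := by
  rcases eq_or_ne x 0 with rfl | hx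
  · have : Nonempty (Fin n) := ⟨0, hn⟩
    obtain ⟨y, hy⟩ := exists_ne (0 : EuclideanSpace ℝ (Fin n))
    obtain ⟨s, hs, _, _, p, hp, _⟩ := hP.exists_isFacetVertexSet_smul_sub_of_ne_zero hz hy
    exact ⟨s, hs, 0, le_rfl, p, hp, (zero_smul ℝ _).symm⟩
  · exact hP.exists_isFacetVertexSet_smul_sub_of_ne_zero hz hx

open Classical in
/-- The finite collection of vertex sets of the simplex facets of `P`. Vertices of such facets are
extreme points of `P`, so restricting to subsets of `P.verts` loses nothing. -/
def facetVertexSets (P : ConvexPolytope n) : Finset (Finset (EuclideanSpace ℝ (Fin n))) :=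
  {s ∈ P.verts.powerset | P.IsFacetVertexSet s}

lemma mem_facetVertexSets : s ∈ P.facetVertexSets ↔ P.IsFacetVertexSet s := by
  simp only [facetVertexSets, mem_filter, mem_powerset]
  exact and_iff_right_of_imp IsFacetVertexSet.subset_verts

open Classical in
theorem IsSimplicial.exists_polytopalFan (hP : P.IsSimplicial) (hn : 0 < n) :
    ∃ Φ : PolytopalFan ℝ (EuclideanSpace ℝ (Fin n)) (EuclideanSpace ℝ (Fin n)),
      Φ.cones = P.facetVertexSets := by
  obtain ⟨z, hz⟩ := P.nonempty_int
  choose! κ sum_eq kronecker sum_lt using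
    fun (s) (hs : s ∈ P.facetVertexSets) ↦ (mem_facetVertexSets.1 hs).exists_coord hz
  refine ⟨⟨fun v ↦ v - z, P.facetVertexSets, κ, sum_eq, kronecker, ?_, fun x ↦ ?_⟩, rfl⟩
  · intro F hF F' hF' v hv hvF
    have hvP := (mem_facetVertexSets.1 hF').mem_extremePoints hv
    exact sum_lt F hF v hvP.1 fun hull ↦ hvF <| mem_of_mem_convexHull_of_mem_extremePoints
      (mem_facetVertexSets.1 hF).2.2.1.subset hvP hull
  · obtain ⟨s, hs, t, ht, p, hp, rfl⟩ := hP.exists_isFacetVertexSet_smul_sub hn hz x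
    rw [← mem_facetVertexSets] at hs
    refine ⟨s, hs, fun v hv ↦ ?_⟩
    have : 0 ≤ κ s v (p - z) := by
      rw [map_sub, sub_nonneg]
      refine convexHull_min (fun w hw ↦ ?_) (convex_halfSpace_ge (κ s v).isLinear _) hp
      rw [Set.mem_ofPred_eq, ← sub_nonneg, ← map_sub, kronecker s hs v hv w hw]
      split_ifs <;> norm_num
    simpa using mul_nonneg ht this

open Classical in
/-- The boundary complex of a simplicial polytope, as an abstract simplicial complex: the vertex
sets of its proper faces, including the empty one. -/
def boundaryComplex (P : ConvexPolytope n) : Finset (Finset (EuclideanSpace ℝ (Fin n))) :=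
  faceComplex P.facetVertexSets

lemma mem_boundaryComplex : G ∈ P.boundaryComplex ↔ ∃ s, P.IsFacetVertexSet s ∧ G ⊆ s := by
  simp [boundaryComplex, mem_facetVertexSets]

lemma sdim_convexHull_of_affineIndependent
    (hs : AffineIndependent ℝ ((↑) : s → EuclideanSpace ℝ (Fin n))) (hne : s.Nonempty) :
    sdim (convexHull ℝ (s : Set (EuclideanSpace ℝ (Fin n)))) + 1 = #s := by
  have := hne.to_subtype
  have range_coe : Set.range ((↑) : s → EuclideanSpace ℝ (Fin n)) = s := by simp
  have := hs.finrank_vectorSpan_add_one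
  rwa [range_coe, Fintype.card_coe, ← direction_affineSpan, ← affineSpan_convexHull,
    direction_affineSpan] at this

lemma convexHull_mem_faces (hG : G ∈ P.boundaryComplex) {j : ℕ} (hcard : #G = j + 1) :
    convexHull ℝ (G : Set (EuclideanSpace ℝ (Fin n))) ∈ P.faces j := by
  obtain ⟨s, hs, hGs⟩ := mem_boundaryComplex.1 hG
  have hne : G.Nonempty := card_pos.1 (by omega)
  have := sdim_convexHull_of_affineIndependent (hs.2.1.mono (coe_subset.2 hGs)) hne
  exact ⟨hs.isExposed_convexHull hGs, by simpa using hne, by omega⟩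

lemma IsSimplicial.exists_convexHull_eq_of_mem_faces (hP : P.IsSimplicial) {j : ℕ} (hj : j < n)
    {F : Set (EuclideanSpace ℝ (Fin n))} (hF : F ∈ P.faces j) :
    ∃ G ∈ P.boundaryComplex, #G = j + 1 ∧
      convexHull ℝ (G : Set (EuclideanSpace ℝ (Fin n))) = F := by
  obtain ⟨hexp, ⟨x, hx⟩, hdim⟩ := hF
  obtain ⟨l, hl⟩ := hexp ⟨x, hx⟩
  change F = l.toExposed P.carrier at hl
  have hl0 : l ≠ 0 := ne_zero_of_sdim_toExposed_lt (hl ▸ hdim.trans_lt hj)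
  obtain ⟨s, hs, hsub⟩ := hP.exists_isFacetVertexSet hl0 (hl ▸ hx)
  have hull_eq := convexHull_inter_eq_of_isExposed s.finite_toSet
    (hexp.mono hs.2.2.1.subset (hl ▸ hsub))
  classical
  have coe_eq : (({v ∈ s | v ∈ F} : Finset _) : Set (EuclideanSpace ℝ (Fin n))) = ↑s ∩ F := by
    simp [Set.ext_iff]
  rw [← coe_eq] at hull_eq
  have hsub' := filter_subset (· ∈ F) s
  refine ⟨{v ∈ s | v ∈ F}, mem_boundaryComplex.2 ⟨s, hs, hsub'⟩, ?_, hull_eq⟩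
  rw [← sdim_convexHull_of_affineIndependent (hs.2.1.mono (coe_subset.2 hsub')), hull_eq, hdim]
  rw [← coe_nonempty, ← convexHull_nonempty_iff (𝕜 := ℝ), hull_eq]
  exact ⟨x, hx⟩

lemma injOn_convexHull_boundaryComplex :
    Set.InjOn (fun G : Finset (EuclideanSpace ℝ (Fin n)) ↦
      convexHull ℝ (G : Set (EuclideanSpace ℝ (Fin n)))) P.boundaryComplex := by
  have subset_of_eq {G G' : Finset (EuclideanSpace ℝ (Fin n))} (hG : G ∈ P.boundaryComplex)
      (hG' : G' ∈ P.boundaryComplex)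
      (h : convexHull ℝ (G : Set (EuclideanSpace ℝ (Fin n))) = convexHull ℝ (G' : Set _)) :
      G ⊆ G' := fun v hv ↦ by
    obtain ⟨s, hs, hGs⟩ := mem_boundaryComplex.1 hG
    obtain ⟨s', hs', hGs'⟩ := mem_boundaryComplex.1 hG'
    exact mem_of_mem_convexHull_of_mem_extremePoints (hs'.isExposed_convexHull hGs').subset
      (hs.mem_extremePoints (hGs hv)) (h ▸ subset_convexHull ℝ _ hv)
  exact fun G hG G' hG' h ↦ (subset_of_eq hG hG' h).antisymm (subset_of_eq hG' hG h.symm)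

theorem IsSimplicial.fcount_eq_card (hP : P.IsSimplicial) {j : ℕ} (hj : j < n) :
    P.fcount j = #{G ∈ P.boundaryComplex | #G = j + 1} := by
  have faces_eq : P.faces j = (fun G : Finset (EuclideanSpace ℝ (Fin n)) ↦
      convexHull ℝ (G : Set (EuclideanSpace ℝ (Fin n)))) ''
        ({G ∈ P.boundaryComplex | #G = j + 1} : Finset _) := by
    ext F
    simp only [Set.mem_image, mem_coe, mem_filter, and_assoc]
    refine ⟨hP.exists_convexHull_eq_of_mem_faces hj, ?_⟩
    rintro ⟨G, hG, hcard, rfl⟩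
    exact convexHull_mem_faces hG hcard
  rw [fcount, faces_eq, Set.InjOn.ncard_image, Set.ncard_coe_finset]
  exact injOn_convexHull_boundaryComplex.mono (coe_subset.2 (filter_subset _ _))

lemma IsSimplicial.card_filter_card_eq_zero (hP : P.IsSimplicial) (hn : 0 < n) :
    #{G ∈ P.boundaryComplex | #G = 0} = 1 := by
  obtain ⟨z, hz⟩ := P.nonempty_int
  obtain ⟨s, hs, _⟩ := hP.exists_isFacetVertexSet_smul_sub hn hz 0
  have : {G ∈ P.boundaryComplex | #G = 0} = {∅} := by
    ext G
    simp only [mem_filter, card_eq_zero, mem_singleton]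
    exact and_iff_right_of_imp fun h ↦ mem_boundaryComplex.2 ⟨s, hs, h ▸ empty_subset s⟩
  rw [this, card_singleton]

lemma IsSimplicial.fZ_sub_one (hP : P.IsSimplicial) (hn : 0 < n) {i : ℕ} (hi : i ≤ n) :
    P.fZ (i - 1) = #{G ∈ P.boundaryComplex | #G = i} := by
  cases i with
  | zero =>
    rw [hP.card_filter_card_eq_zero hn]
    simp [fZ]
  | succ j =>
    rw [← hP.fcount_eq_card hi, fZ, if_neg (by push_cast; omega), if_pos (by push_cast; omega)]
    simp

lemma card_le_of_mem_boundaryComplex (hG : G ∈ P.boundaryComplex) : #G ≤ n := by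
  obtain ⟨s, hs, hGs⟩ := mem_boundaryComplex.1 hG
  exact (card_le_card hGs).trans hs.1.le

theorem IsSimplicial.sum_neg_one_pow_mul_choose_mul_fZ {R : Type*} [CommRing R]
    (hP : P.IsSimplicial) (hn : 0 < n) {m : ℕ} (hm : m ≤ n) :
    ∑ i ∈ Icc m n, (-1 : R) ^ i * (i.choose m) * (P.fZ (i - 1)) = (-1) ^ n * P.fZ (m - 1) := by
  obtain ⟨Φ, hΦ⟩ := hP.exists_polytopalFan hn
  have key := Φ.sum_neg_one_pow_card_mul_choose (R := R) m
  rw [hΦ, finrank_euclideanSpace_fin] at key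
  rw [← boundaryComplex, ← hP.fZ_sub_one hn hm] at key
  rw [← key, ← sum_fiberwise_of_maps_to
    fun G hG ↦ mem_range_succ_iff.2 (card_le_of_mem_boundaryComplex hG)]
  have fiber (i) (hi : i ∈ range (n + 1)) :
      ∑ G ∈ P.boundaryComplex with #G = i, (-1 : R) ^ #G * (#G).choose m
        = (-1) ^ i * i.choose m * P.fZ (i - 1) := by
    rw [hP.fZ_sub_one hn (mem_range_succ_iff.1 hi), ← nsmul_eq_mul', ← sum_const]
    exact sum_congr rfl fun G hG ↦ by rw [(mem_filter.1 hG).2]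
  rw [sum_congr rfl fiber]
  refine sum_subset (fun i hi ↦ by simp_all) fun i hi hi' ↦ ?_
  have : i < m := by simp_all
  simp [Nat.choose_eq_zero_of_lt this]

end ConvexPolytope

lemma sum_Icc_natCast_sub_one {M : Type*} [AddCommMonoid M] (a b : ℕ) (f : ℤ → M) :
    ∑ j ∈ Finset.Icc ((a : ℤ) - 1) ((b : ℤ) - 1), f j = ∑ i ∈ Finset.Icc a b, f ((i : ℤ) - 1) := by
  refine (Finset.sum_nbij' (fun i : ℕ ↦ (i : ℤ) - 1) (fun j ↦ (j + 1).toNat)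
    ?_ ?_ ?_ ?_ fun _ _ ↦ rfl).symm
  all_goals simp only [Finset.mem_Icc]; omega

/-- The Dehn–Sommerville equations for an `n`-dimensional simplicial convex polytope:
for `-1 ≤ k ≤ n - 2`,
`Σ_{j=k}^{n-1} (-1)^j C(j+1, k+1) f_j = (-1)^{n-1} f_k`. -/
theorem dehn_sommerville (n : ℕ) (P : ConvexPolytope n) (hs : P.IsSimplicial)
    (k : ℤ) (hk : -1 ≤ k) (hk' : k ≤ (n : ℤ) - 2) :
    ∑ j ∈ Finset.Icc k ((n : ℤ) - 1),
        (-1 : ℚ) ^ j * (Nat.choose (j + 1).toNat (k + 1).toNat : ℚ) * (P.fZ j : ℚ)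
      = (-1 : ℚ) ^ ((n : ℤ) - 1) * (P.fZ k : ℚ) := by
  obtain ⟨m, rfl⟩ : ∃ m : ℕ, k = m - 1 := ⟨(k + 1).toNat, by omega⟩
  have zpow_natCast_sub_one (i : ℕ) : (-1 : ℚ) ^ ((i : ℤ) - 1) = -(-1) ^ i := by
    rw [zpow_sub_one₀ (by norm_num), zpow_natCast]
    norm_num
  rw [sum_Icc_natCast_sub_one]
  simp only [zpow_natCast_sub_one, sub_add_cancel, Int.toNat_natCast, neg_mul,
    Finset.sum_neg_distrib]
  rw [hs.sum_neg_one_pow_mul_choose_mul_fZ (by omega) (by omega)]
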